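/- In the bounded-degree uniform attachment process, for any fixed s ≥ m, with high probability (i.e., with probability tending to 1 as n → ∞) the degree of the vertex s in G_n equals d. Moreover, for any fixed n_0 and a, with high probability every vertex of G_n at graph distance at most a from the set [n_0] = {1, …, n_0} has degree exactly d in G_n. -/

import Mathlib

open MeasureTheory ProbabilityTheory Filter Topology
open scoped ENNReal

/-- The degree of a vertex in a simple graph on `ℕ` (the number of its neighbours). -/
noncomputable def graphDeg (g : SimpleGraph ℕ) (v : ℕ) : ℕ := (g.neighborSet v).ncard

/-- The complete graph on the vertex set `[m] = {1,…,m}`, viewed as a simple graph on `ℕ`. -/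
def initGraph (m : ℕ) : SimpleGraph ℕ :=
  SimpleGraph.fromRel (fun a b => a ∈ Finset.Icc 1 m ∧ b ∈ Finset.Icc 1 m)

/-- The graph obtained from `g` by joining the (new) vertex `v` to every vertex of `S`. -/
def attachStep (g : SimpleGraph ℕ) (v : ℕ) (S : Finset ℕ) : SimpleGraph ℕ :=
  g ⊔ SimpleGraph.fromRel (fun a b => a = v ∧ b ∈ S)

/-- The set of vertices of `[n] = {1,…,n}` whose degree in `g` is strictly less than `d`. -/
noncomputable def lowDegSet (d : ℕ) (g : SimpleGraph ℕ) (n : ℕ) : Finset ℕ :=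
  (Finset.Icc 1 n).filter (fun v => graphDeg g v < d)

/-- `IsUAProcess m d μ G` says that `(G n)_{n ≥ m}` (as random graphs on `ℕ`, with `G n`
supported on the vertex set `[n] = {1,…,n}`) is the bounded-degree uniform attachment
process: `G m` is the complete graph on `[m]`, and `G (n+1)` is obtained from `G n` by
joining the new vertex `n+1` to a uniformly chosen `m`-element subset of the set of
vertices of `G n` of degree less than `d`, conditionally on `G n` and independently of
the past (note that `G n` determines the whole past of the process). -/
def IsUAProcess (m d : ℕ) {Ω : Type*} [MeasurableSpace Ω] (μ : Measure Ω)
    (G : ℕ → Ω → SimpleGraph ℕ) : Prop :=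
  (∀ n g, MeasurableSet {ω | G n ω = g}) ∧
  (∀ ω, G m ω = initGraph m) ∧
  (∀ n, m ≤ n → ∀ g : SimpleGraph ℕ, ∀ S : Finset ℕ,
    S ⊆ lowDegSet d g n → S.card = m →
    μ ({ω | G (n + 1) ω = attachStep g (n + 1) S} ∩ {ω | G n ω = g})
      = μ {ω | G n ω = g} / (((lowDegSet d g n).card.choose m : ℝ≥0∞)))

/-- The deterministic invariants of the bounded-degree uniform attachment process at time `n`. -/
structure UAInvariant (m d n : ℕ) (g : SimpleGraph ℕ) : Prop where
  mem_of_adj : ∀ a b, g.Adj a b → a ∈ Finset.Icc 1 n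
  deg_le : ∀ v ∈ Finset.Icc 1 n, graphDeg g v ≤ d
  le_deg : ∀ v ∈ Finset.Icc 1 n, m ≤ graphDeg g v + 1
  sum_deg : ∑ v ∈ Finset.Icc 1 n, graphDeg g v + m * (m + 1) = 2 * m * n

lemma graphDeg_initGraph {m v : ℕ} (hv : v ∈ Finset.Icc 1 m) :
    graphDeg (initGraph m) v = m - 1 := by
  have h : (initGraph m).neighborSet v = ((Finset.Icc 1 m).erase v : Finset ℕ) := by
    ext w
    simp only [initGraph, SimpleGraph.mem_neighborSet, SimpleGraph.fromRel_adj, Finset.mem_coe,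
      Finset.mem_erase]
    tauto
  rw [graphDeg, h, Set.ncard_coe_finset, Finset.card_erase_of_mem hv]
  simp

lemma uaInvariant_initGraph {m d : ℕ} (hm : 1 ≤ m) (hd : 2 * m < d) :
    UAInvariant m d m (initGraph m) where
  mem_of_adj a b h := by
    simp only [initGraph, SimpleGraph.fromRel_adj] at h
    tauto
  deg_le v hv := by rw [graphDeg_initGraph hv]; omega
  le_deg v hv := by rw [graphDeg_initGraph hv]; omega
  sum_deg := by
    rw [Finset.sum_congr rfl fun v hv => graphDeg_initGraph hv]
    obtain ⟨k, rfl⟩ := Nat.exists_eq_add_of_le' hm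
    simp
    ring

lemma attachStep_adj {g : SimpleGraph ℕ} {v : ℕ} {S : Finset ℕ} {a b : ℕ} :
    (attachStep g v S).Adj a b ↔ g.Adj a b ∨ (a ≠ b ∧ (a = v ∧ b ∈ S ∨ b = v ∧ a ∈ S)) := by
  simp [attachStep]

lemma mem_lowDegSet {d n v : ℕ} {g : SimpleGraph ℕ} :
    v ∈ lowDegSet d g n ↔ v ∈ Finset.Icc 1 n ∧ graphDeg g v < d := by
  simp [lowDegSet]

lemma lowDegSet_subset {d n : ℕ} {g : SimpleGraph ℕ} : lowDegSet d g n ⊆ Finset.Icc 1 n :=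
  Finset.filter_subset _ _

namespace UAInvariant

variable {m d n : ℕ} {g : SimpleGraph ℕ}

lemma finite_neighborSet (h : UAInvariant m d n g) (v : ℕ) : (g.neighborSet v).Finite :=
  (Finset.Icc 1 n).finite_toSet.subset fun w hw => h.mem_of_adj w v hw.symm

lemma neighborSet_attachStep_new (h : UAInvariant m d n g) {S : Finset ℕ}
    (hS : S ⊆ Finset.Icc 1 n) : (attachStep g (n + 1) S).neighborSet (n + 1) = S := by
  ext w
  have h1 : ¬ g.Adj (n + 1) w := fun hw => by
    have := h.mem_of_adj _ _ hw
    simp at this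
  have h2 : n + 1 ∉ S := fun hw => by
    have := hS hw
    simp at this
  simp only [SimpleGraph.mem_neighborSet, attachStep_adj, Finset.mem_coe]
  constructor
  · tauto
  · intro hw
    exact Or.inr ⟨fun e => h2 (e ▸ hw), Or.inl ⟨trivial, hw⟩⟩

lemma graphDeg_attachStep_new (h : UAInvariant m d n g) {S : Finset ℕ}
    (hS : S ⊆ Finset.Icc 1 n) : graphDeg (attachStep g (n + 1) S) (n + 1) = S.card := by
  rw [graphDeg, h.neighborSet_attachStep_new hS, Set.ncard_coe_finset]

lemma graphDeg_attachStep_old (h : UAInvariant m d n g) (S : Finset ℕ) {v : ℕ}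
    (hv : v ∈ Finset.Icc 1 n) :
    graphDeg (attachStep g (n + 1) S) v = graphDeg g v + if v ∈ S then 1 else 0 := by
  have hvn : v ≠ n + 1 := by
    rw [Finset.mem_Icc] at hv
    omega
  split_ifs with hvS
  · have hN : (attachStep g (n + 1) S).neighborSet v = insert (n + 1) (g.neighborSet v) := by
      ext w
      simp only [SimpleGraph.mem_neighborSet, attachStep_adj, Set.mem_insert_iff]
      constructor
      · tauto
      · rintro (rfl | hw)
        · exact Or.inr ⟨hvn, Or.inr ⟨rfl, hvS⟩⟩
        · exact Or.inl hw
    rw [graphDeg, hN, Set.ncard_insert_of_notMem _ (h.finite_neighborSet v), graphDeg]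
    intro hw
    have := h.mem_of_adj _ _ (SimpleGraph.Adj.symm hw)
    simp at this
  · have hN : (attachStep g (n + 1) S).neighborSet v = g.neighborSet v := by
      ext w
      simp only [SimpleGraph.mem_neighborSet, attachStep_adj]
      tauto
    rw [graphDeg, hN, graphDeg, add_zero]

lemma attachStep (h : UAInvariant m d n g) (hd : 2 * m < d) {S : Finset ℕ}
    (hS : S ⊆ lowDegSet d g n) (hc : S.card = m) :
    UAInvariant m d (n + 1) (attachStep g (n + 1) S) := by
  have hSI : S ⊆ Finset.Icc 1 n := hS.trans lowDegSet_subset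
  have hcases : ∀ v ∈ Finset.Icc 1 (n + 1), v ∈ Finset.Icc 1 n ∨ v = n + 1 := by
    intro v hv
    simp only [Finset.mem_Icc] at hv ⊢
    omega
  have hmono : Finset.Icc 1 n ⊆ Finset.Icc 1 (n + 1) := Finset.Icc_subset_Icc_right (by omega)
  refine ⟨fun a b hab => ?_, fun v hv => ?_, fun v hv => ?_, ?_⟩
  · rw [attachStep_adj] at hab
    rcases hab with hab | ⟨-, ⟨rfl, -⟩ | ⟨-, ha⟩⟩
    · exact hmono (h.mem_of_adj _ _ hab)
    · simp
    · exact hmono (hSI ha)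
  · rcases hcases v hv with hv | rfl
    · rw [h.graphDeg_attachStep_old S hv]
      split_ifs with hvS
      · exact (mem_lowDegSet.1 (hS hvS)).2
      · exact h.deg_le v hv
    · rw [h.graphDeg_attachStep_new hSI]
      omega
  · rcases hcases v hv with hv | rfl
    · rw [h.graphDeg_attachStep_old S hv]
      have := h.le_deg v hv
      omega
    · rw [h.graphDeg_attachStep_new hSI]
      omega
  · rw [Finset.sum_Icc_succ_top (by omega), h.graphDeg_attachStep_new hSI,
      Finset.sum_congr rfl fun v hv => h.graphDeg_attachStep_old S hv, Finset.sum_add_distrib,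
      Finset.sum_ite_mem, Finset.inter_eq_right.2 hSI]
    have := h.sum_deg
    simp only [Finset.sum_const, smul_eq_mul, mul_one, hc]
    linarith

lemma le_card_lowDegSet (h : UAInvariant m d n g) (hd : 2 * m < d) (hn : m ≤ n) :
    m ≤ (lowDegSet d g n).card := by
  have hsplit := Finset.sum_filter_add_sum_filter_not (Finset.Icc 1 n)
    (fun v => graphDeg g v < d) (fun v => graphDeg g v + 1)
  have hcard := Finset.card_filter_add_card_filter_not (s := Finset.Icc 1 n)
    (fun v => graphDeg g v < d)
  have hlow : (lowDegSet d g n).card * m ≤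
      ∑ v ∈ Finset.Icc 1 n with graphDeg g v < d, (graphDeg g v + 1) := by
    rw [← smul_eq_mul]
    exact Finset.card_nsmul_le_sum _ _ _ fun v hv => h.le_deg v (Finset.mem_filter.1 hv).1
  have hhigh : ((Finset.Icc 1 n).filter fun v => ¬ graphDeg g v < d).card * (d + 1) ≤
      ∑ v ∈ Finset.Icc 1 n with ¬ graphDeg g v < d, (graphDeg g v + 1) := by
    rw [← smul_eq_mul]
    refine Finset.card_nsmul_le_sum _ _ _ fun v hv => ?_
    have := (Finset.mem_filter.1 hv).2
    omega
  have hsum := h.sum_deg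
  rw [Finset.sum_add_distrib (s := Finset.Icc 1 n)] at hsplit
  simp only [Finset.sum_const, Nat.card_Icc, smul_eq_mul, mul_one, Nat.add_sub_cancel]
    at hsplit hcard
  change (lowDegSet d g n).card + _ = n at hcard
  obtain ⟨j, rfl⟩ := Nat.exists_eq_add_of_lt hd
  obtain ⟨i, rfl⟩ := Nat.exists_eq_add_of_le hn
  by_contra! hlt
  obtain ⟨l, hl⟩ := Nat.exists_eq_add_of_lt hlt
  generalize (lowDegSet _ g _).card = k at *
  generalize Finset.card _ = q at *
  obtain rfl : q = l + 1 + i := by omega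
  subst hl
  nlinarith

end UAInvariant

lemma finite_setOf_uaInvariant (m d n : ℕ) : {g | UAInvariant m d n g}.Finite := by
  have hinj : Function.Injective fun g : SimpleGraph ℕ => {p : ℕ × ℕ | g.Adj p.1 p.2} := by
    intro g g' h
    ext a b
    exact Set.ext_iff.1 h (a, b)
  refine (((Finset.Icc 1 n ×ˢ Finset.Icc 1 n).finite_toSet.finite_subsets).preimage
    hinj.injOn).subset fun g hg p hp => ?_
  exact Finset.mem_coe.2 (Finset.mem_product.2 ⟨hg.mem_of_adj _ _ hp, hg.mem_of_adj _ _ hp.symm⟩)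

/-- The finite set of pairs of a graph satisfying the invariants at time `n` and a set of vertices
to which the next vertex may be attached. -/
noncomputable def uaTransitions (m d n : ℕ) : Finset (Σ _ : SimpleGraph ℕ, Finset ℕ) :=
  (finite_setOf_uaInvariant m d n).toFinset.sigma fun g => (lowDegSet d g n).powersetCard m

lemma mem_uaTransitions {m d n : ℕ} {t : Σ _ : SimpleGraph ℕ, Finset ℕ} :
    t ∈ uaTransitions m d n ↔
      UAInvariant m d n t.1 ∧ t.2 ⊆ lowDegSet d t.1 n ∧ t.2.card = m := by
  simp [uaTransitions]

section Transitions

variable {m d : ℕ} {Ω : Type*} {G : ℕ → Ω → SimpleGraph ℕ}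

/-- The event that the process makes the transition `t` at time `n`. -/
def transitionEvent (G : ℕ → Ω → SimpleGraph ℕ) (n : ℕ) (t : Σ _ : SimpleGraph ℕ, Finset ℕ) :
    Set Ω :=
  {ω | G (n + 1) ω = attachStep t.1 (n + 1) t.2} ∩ {ω | G n ω = t.1}

lemma pairwiseDisjoint_transitionEvent (n : ℕ) :
    (uaTransitions m d n : Set (Σ _ : SimpleGraph ℕ, Finset ℕ)).PairwiseDisjoint
      (transitionEvent G n) := by
  rintro ⟨g, S⟩ ht ⟨g', S'⟩ ht' hne
  obtain ⟨hg, hS, -⟩ := mem_uaTransitions.1 ht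
  obtain ⟨-, hS', -⟩ := mem_uaTransitions.1 ht'
  refine Set.disjoint_left.2 fun ω hω hω' => hne ?_
  obtain rfl : g = g' := hω.2.symm.trans hω'.2
  have h := congrArg (fun g => g.neighborSet (n + 1)) (hω.1.symm.trans hω'.1)
  simp only at hS hS' h
  rw [hg.neighborSet_attachStep_new (hS.trans lowDegSet_subset),
    hg.neighborSet_attachStep_new (hS'.trans lowDegSet_subset), Finset.coe_inj] at h
  rw [h]

namespace IsUAProcess

variable [MeasurableSpace Ω] {μ : Measure Ω}

lemma measurableSet_transitionEvent (hG : IsUAProcess m d μ G) (n : ℕ)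
    (t : Σ _ : SimpleGraph ℕ, Finset ℕ) : MeasurableSet (transitionEvent G n t) :=
  (hG.1 _ _).inter (hG.1 _ _)

lemma lintegral_eq_sum (hG : IsUAProcess m d μ G) {n : ℕ}
    (h : ∀ᵐ ω ∂μ, UAInvariant m d n (G n ω)) (f : SimpleGraph ℕ → ℝ≥0∞) :
    ∫⁻ ω, f (G n ω) ∂μ =
      ∑ g ∈ (finite_setOf_uaInvariant m d n).toFinset, f g * μ {ω | G n ω = g} := by
  have hU : (⋃ g ∈ (finite_setOf_uaInvariant m d n).toFinset, {ω | G n ω = g}) =ᵐ[μ] Set.univ := by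
    rw [ae_eq_univ, ← mem_ae_iff]
    filter_upwards [h] with ω hω
    simpa using hω
  rw [← setLIntegral_univ, ← setLIntegral_congr hU, lintegral_biUnion_finset
    (fun g _ g' _ hne => Set.disjoint_left.2 fun ω h h' => hne (h.symm.trans h'))
    (fun g _ => hG.1 n g)]
  refine Finset.sum_congr rfl fun g _ => ?_
  rw [setLIntegral_congr_fun (g := fun _ => f g) (hG.1 n g) fun ω hω => by
    simp only [Set.mem_ofPred_eq] at hω
    rw [hω], setLIntegral_const]

lemma lintegral_succ_eq_sum (hG : IsUAProcess m d μ G) {n : ℕ} (hn : m ≤ n)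
    (h : ∀ᵐ ω ∂μ, ∃ t ∈ uaTransitions m d n, ω ∈ transitionEvent G n t)
    (f : SimpleGraph ℕ → ℝ≥0∞) :
    ∫⁻ ω, f (G (n + 1) ω) ∂μ = ∑ g ∈ (finite_setOf_uaInvariant m d n).toFinset,
      ∑ S ∈ (lowDegSet d g n).powersetCard m, f (attachStep g (n + 1) S) *
        (μ {ω | G n ω = g} / (lowDegSet d g n).card.choose m) := by
  have hU : (⋃ t ∈ uaTransitions m d n, transitionEvent G n t) =ᵐ[μ] Set.univ := by
    rw [ae_eq_univ, ← mem_ae_iff]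
    filter_upwards [h] with ω hω
    simpa using hω
  rw [← setLIntegral_univ, ← setLIntegral_congr hU, lintegral_biUnion_finset
    (pairwiseDisjoint_transitionEvent n) (fun t _ => hG.measurableSet_transitionEvent n t),
    uaTransitions, Finset.sum_sigma]
  refine Finset.sum_congr rfl fun g _ => Finset.sum_congr rfl fun S hS => ?_
  rw [setLIntegral_congr_fun (g := fun _ => f (attachStep g (n + 1) S))
    (hG.measurableSet_transitionEvent n _) fun ω hω => by
      have := hω.1
      simp only [Set.mem_ofPred_eq] at this
      rw [this], setLIntegral_const]
  rw [Finset.mem_powersetCard] at hS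
  rw [transitionEvent, hG.2.2 n hn g S hS.1 hS.2]

lemma ae_transition (hG : IsUAProcess m d μ G) [IsProbabilityMeasure μ] (hd : 2 * m < d) {n : ℕ}
    (hn : m ≤ n) (h : ∀ᵐ ω ∂μ, UAInvariant m d n (G n ω)) :
    ∀ᵐ ω ∂μ, ∃ t ∈ uaTransitions m d n, ω ∈ transitionEvent G n t := by
  have hmeas : MeasurableSet (⋃ t ∈ uaTransitions m d n, transitionEvent G n t) :=
    Finset.measurableSet_biUnion _ fun t _ => hG.measurableSet_transitionEvent n t
  have hone : μ (⋃ t ∈ uaTransitions m d n, transitionEvent G n t) = 1 := by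
    have hsum := hG.lintegral_eq_sum h fun _ => 1
    simp only [lintegral_one, measure_univ, one_mul] at hsum
    rw [measure_biUnion_finset (pairwiseDisjoint_transitionEvent n)
      (fun t _ => hG.measurableSet_transitionEvent n t), uaTransitions, Finset.sum_sigma, hsum]
    refine Finset.sum_congr rfl fun g hg => ?_
    have hg : UAInvariant m d n g := by simpa using hg
    simp only [transitionEvent]
    rw [Finset.sum_congr rfl fun S hS => hG.2.2 n hn g S (Finset.mem_powersetCard.1 hS).1
      (Finset.mem_powersetCard.1 hS).2, Finset.sum_const, Finset.card_powersetCard, nsmul_eq_mul]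
    refine ENNReal.mul_div_cancel ?_ (ENNReal.natCast_ne_top _)
    exact_mod_cast (Nat.choose_pos (hg.le_card_lowDegSet hd hn)).ne'
  have := (prob_compl_eq_zero_iff hmeas).2 hone
  filter_upwards [mem_ae_iff.2 this] with ω hω
  simpa using hω

lemma ae_invariant (hG : IsUAProcess m d μ G) [IsProbabilityMeasure μ] (hm : 1 ≤ m)
    (hd : 2 * m < d) {n : ℕ} (hn : m ≤ n) : ∀ᵐ ω ∂μ, UAInvariant m d n (G n ω) := by
  induction n, hn using Nat.le_induction with
  | base =>
    refine ae_of_all _ fun ω => ?_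
    rw [hG.2.1 ω]
    exact uaInvariant_initGraph hm hd
  | succ n hn ih =>
    filter_upwards [hG.ae_transition hd hn ih] with ω hω
    obtain ⟨t, ht, hω⟩ := hω
    obtain ⟨hg, hS, hc⟩ := mem_uaTransitions.1 ht
    have := hg.attachStep hd hS hc
    rwa [← hω.1] at this

end IsUAProcess

end Transitions

lemma choose_le_card_mul_card_filter_mem {α : Type*} [DecidableEq α] {A : Finset α} {s : α}
    (hs : s ∈ A) {m : ℕ} (hm : 1 ≤ m) :
    A.card.choose m ≤ A.card * ((A.powersetCard m).filter (s ∈ ·)).card := by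
  have hsplit := Finset.card_filter_add_card_filter_not (s := A.powersetCard m) (s ∈ ·)
  have hnot : (A.powersetCard m).filter (s ∉ ·) = (A.erase s).powersetCard m := by
    ext S
    simp only [Finset.mem_filter, Finset.mem_powersetCard, Finset.subset_erase]
    tauto
  rw [hnot, Finset.card_powersetCard, Finset.card_powersetCard, Finset.card_erase_of_mem hs]
    at hsplit
  obtain ⟨k, hk⟩ := Nat.exists_eq_add_of_lt (Finset.card_pos.2 ⟨s, hs⟩)
  obtain ⟨l, rfl⟩ := Nat.exists_eq_add_of_le' hm
  rw [zero_add] at hk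
  rw [hk, Nat.choose_succ_succ, Nat.add_sub_cancel, Nat.add_right_cancel_iff] at hsplit
  rw [hsplit, hk, Nat.add_one_mul_choose_eq]
  exact Nat.le_mul_of_pos_right _ (by omega)

/-- The total decrease of the deficiency `d - deg s` in one step, over all choices of the step. -/
lemma UAInvariant.sum_deficiency_le {m d n : ℕ} {g : SimpleGraph ℕ} (h : UAInvariant m d n g)
    (hm : 1 ≤ m) {s : ℕ} (hs : s ∈ Finset.Icc 1 n) :
    n * ∑ S ∈ (lowDegSet d g n).powersetCard m, (d - graphDeg (_root_.attachStep g (n + 1) S) s) +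
      (if graphDeg g s < d then 1 else 0) * (lowDegSet d g n).card.choose m ≤
      n * ((lowDegSet d g n).card.choose m * (d - graphDeg g s)) := by
  have hdeg (S : Finset ℕ) := h.graphDeg_attachStep_old S hs
  split_ifs with hlt
  · have hsum : ∑ S ∈ (lowDegSet d g n).powersetCard m,
          (d - graphDeg (_root_.attachStep g (n + 1) S) s) +
        (((lowDegSet d g n).powersetCard m).filter (s ∈ ·)).card =
        (lowDegSet d g n).card.choose m * (d - graphDeg g s) := by
      rw [Finset.card_filter, ← Finset.sum_add_distrib, ← Finset.card_powersetCard,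
        ← smul_eq_mul, ← Finset.sum_const]
      refine Finset.sum_congr rfl fun S _ => ?_
      rw [hdeg]
      split_ifs <;> omega
    have hle := choose_le_card_mul_card_filter_mem (mem_lowDegSet.2 ⟨hs, hlt⟩) hm
    have hcard : (lowDegSet d g n).card ≤ n := by
      simpa using Finset.card_le_card (lowDegSet_subset (d := d) (g := g) (n := n))
    rw [← hsum, mul_add, one_mul]
    exact Nat.add_le_add_left (hle.trans (Nat.mul_le_mul_right _ hcard)) _
  · rw [zero_mul, add_zero, ← Finset.card_powersetCard, ← smul_eq_mul (a := Finset.card _)]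
    refine Nat.mul_le_mul_left _ (Finset.sum_le_card_nsmul _ _ _ fun S _ => ?_)
    rw [hdeg]
    omega

namespace IsUAProcess

variable {m d : ℕ} {Ω : Type*} {G : ℕ → Ω → SimpleGraph ℕ} [MeasurableSpace Ω] {μ : Measure Ω}

lemma measure_setOf_eq_sum (hG : IsUAProcess m d μ G) {n : ℕ}
    (h : ∀ᵐ ω ∂μ, UAInvariant m d n (G n ω)) (P : SimpleGraph ℕ → Prop) [DecidablePred P] :
    μ {ω | P (G n ω)} = ∑ g ∈ (finite_setOf_uaInvariant m d n).toFinset,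
      (if P g then 1 else 0) * μ {ω | G n ω = g} := by
  rw [← hG.lintegral_eq_sum h fun g => if P g then 1 else 0]
  have hae : (⋃ g ∈ (finite_setOf_uaInvariant m d n).toFinset.filter P, {ω | G n ω = g}) =ᵐ[μ]
      {ω | P (G n ω)} := by
    filter_upwards [h] with ω hω
    refine propext ?_
    change ω ∈ (⋃ g ∈ _, _) ↔ ω ∈ {ω | P (G n ω)}
    simp [hω]
  have hmeas : NullMeasurableSet {ω | P (G n ω)} μ :=
    (Finset.measurableSet_biUnion _ fun g _ => hG.1 n g).nullMeasurableSet.congr hae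
  rw [← lintegral_indicator_one₀ hmeas]
  refine lintegral_congr fun ω => ?_
  simp [Set.indicator_apply]

lemma lintegral_deficiency_succ_add_le (hG : IsUAProcess m d μ G) [IsProbabilityMeasure μ]
    (hm : 1 ≤ m) (hd : 2 * m < d) {n s : ℕ} (hn : m ≤ n) (hs : s ∈ Finset.Icc 1 n) :
    ∫⁻ ω, ((d - graphDeg (G (n + 1) ω) s : ℕ) : ℝ≥0∞) ∂μ +
      (n : ℝ≥0∞)⁻¹ * μ {ω | graphDeg (G n ω) s < d} ≤
      ∫⁻ ω, ((d - graphDeg (G n ω) s : ℕ) : ℝ≥0∞) ∂μ := by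
  have hinv := hG.ae_invariant hm hd hn
  rw [hG.lintegral_succ_eq_sum hn (hG.ae_transition hd hn hinv)
      (fun g => ((d - graphDeg g s : ℕ) : ℝ≥0∞)),
    hG.lintegral_eq_sum hinv (fun g => ((d - graphDeg g s : ℕ) : ℝ≥0∞)),
    hG.measure_setOf_eq_sum hinv (fun g => graphDeg g s < d), Finset.mul_sum,
    ← Finset.sum_add_distrib]
  refine Finset.sum_le_sum fun g hg => ?_
  have hg : UAInvariant m d n g := by simpa using hg
  have hle : ((_ : ℕ) : ℝ≥0∞) ≤ _ := Nat.cast_le.2 (hg.sum_deficiency_le hm hs)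
  have hC : ((lowDegSet d g n).card.choose m : ℝ≥0∞) ≠ 0 := by
    exact_mod_cast (Nat.choose_pos (hg.le_card_lowDegSet hd hn)).ne'
  have hC' : ((lowDegSet d g n).card.choose m : ℝ≥0∞) ≠ ⊤ := ENNReal.natCast_ne_top _
  have hn0 : (n : ℝ≥0∞) ≠ 0 := by
    exact_mod_cast (by omega : n ≠ 0)
  have hn' : (n : ℝ≥0∞) ≠ ⊤ := ENNReal.natCast_ne_top _
  simp only [Nat.cast_add, Nat.cast_mul, Nat.cast_sum, Nat.cast_ite, Nat.cast_one,
    Nat.cast_zero] at hle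
  rw [← Finset.sum_mul]
  generalize ((lowDegSet d g n).card.choose m : ℝ≥0∞) = C at *
  generalize (n : ℝ≥0∞) = N at *
  generalize μ {ω | G n ω = g} = p
  generalize (if graphDeg g s < d then 1 else 0 : ℝ≥0∞) = i at *
  generalize ((d - graphDeg g s : ℕ) : ℝ≥0∞) = D at *
  generalize (∑ S ∈ (lowDegSet d g n).powersetCard m,
    ((d - graphDeg (attachStep g (n + 1) S) s : ℕ) : ℝ≥0∞)) = F at *
  have hNN := ENNReal.mul_inv_cancel hn0 hn'
  have hCC := ENNReal.mul_inv_cancel hC hC'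
  calc F * (p / C) + N⁻¹ * (i * p)
      = (N * N⁻¹) * F * (p * C⁻¹) + N⁻¹ * (i * p) * (C * C⁻¹) := by
        rw [hNN, hCC, one_mul, mul_one, div_eq_mul_inv]
    _ = (N * F + i * C) * (N⁻¹ * C⁻¹ * p) := by ring
    _ ≤ (N * (C * D)) * (N⁻¹ * C⁻¹ * p) := by gcongr
    _ = (N * N⁻¹) * (C * C⁻¹) * (D * p) := by ring
    _ = D * p := by rw [hNN, hCC, one_mul, one_mul]

lemma measure_forall_graphDeg_lt (hG : IsUAProcess m d μ G) [IsProbabilityMeasure μ]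
    (hm : 1 ≤ m) (hd : 2 * m < d) {N s : ℕ} (hN : m ≤ N) (hs : s ∈ Finset.Icc 1 N) :
    μ {ω | ∀ n, N ≤ n → graphDeg (G n ω) s < d} = 0 := by
  set B := {ω | ∀ n, N ≤ n → graphDeg (G n ω) s < d}
  have hbound : ∀ j : ℕ, ∫⁻ ω, ((d - graphDeg (G (N + j) ω) s : ℕ) : ℝ≥0∞) ∂μ +
      ∑ i ∈ Finset.range j, ((i + N : ℕ) : ℝ≥0∞)⁻¹ * μ B ≤ d := by
    intro j
    induction j with
    | zero =>
      rw [Finset.sum_range_zero, add_zero]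
      calc _ ≤ ∫⁻ _, (d : ℝ≥0∞) ∂μ := lintegral_mono fun ω => Nat.cast_le.2 (Nat.sub_le _ _)
        _ = d := by simp
    | succ j ih =>
      refine le_trans ?_ ih
      rw [Finset.sum_range_succ, add_comm (Finset.sum _ _), ← add_assoc]
      gcongr
      have hs' : s ∈ Finset.Icc 1 (N + j) := by
        rw [Finset.mem_Icc] at hs ⊢
        omega
      refine le_trans ?_ (hG.lintegral_deficiency_succ_add_le hm hd (by omega) hs')
      rw [add_comm j N, ← add_assoc]
      gcongr
      exact fun ω hω => hω _ (by omega)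
  have htop : ∑' i : ℕ, ((i + N : ℕ) : ℝ≥0∞)⁻¹ = ⊤ := by
    have hns : ¬ Summable fun i : ℕ => (((i + N : ℕ) : NNReal)⁻¹) := by
      rw [← NNReal.summable_coe]
      push_cast
      have := mt (summable_nat_add_iff (f := fun i : ℕ => ((i : ℝ))⁻¹) N).1
        Real.not_summable_natCast_inv
      simpa using this
    by_contra hne
    refine hns (ENNReal.tsum_coe_ne_top_iff_summable.1 ?_)
    convert hne using 4 with i
    rw [ENNReal.coe_inv (by
      rw [Finset.mem_Icc] at hs
      exact_mod_cast (by omega : i + N ≠ 0)), ENNReal.coe_natCast]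
  by_contra hB
  have hle : ∑' i : ℕ, ((i + N : ℕ) : ℝ≥0∞)⁻¹ * μ B ≤ d := by
    rw [ENNReal.tsum_eq_iSup_nat]
    exact iSup_le fun j => le_add_self.trans (hbound j)
  rw [ENNReal.tsum_mul_right, htop, ENNReal.top_mul hB, top_le_iff] at hle
  exact ENNReal.natCast_ne_top _ hle

lemma ae_forall_transition (hG : IsUAProcess m d μ G) [IsProbabilityMeasure μ] (hm : 1 ≤ m)
    (hd : 2 * m < d) :
    ∀ᵐ ω ∂μ, ∀ n, m ≤ n → ∃ t ∈ uaTransitions m d n, ω ∈ transitionEvent G n t := by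
  rw [ae_all_iff]
  intro n
  rw [Filter.eventually_imp_distrib_left]
  exact fun hn => hG.ae_transition hd hn (hG.ae_invariant hm hd hn)

lemma ae_eventually_graphDeg_eq (hG : IsUAProcess m d μ G) [IsProbabilityMeasure μ] (hm : 1 ≤ m)
    (hd : 2 * m < d) (s : ℕ) :
    ∀ᵐ ω ∂μ, 1 ≤ s → ∀ᶠ n in atTop, graphDeg (G n ω) s = d := by
  rw [Filter.eventually_imp_distrib_left]
  intro hs
  have hs' : s ∈ Finset.Icc 1 (max m s) := by simp [hs]
  have hnot := hG.measure_forall_graphDeg_lt hm hd (le_max_left m s) hs'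
  filter_upwards [hG.ae_forall_transition hm hd, measure_eq_zero_iff_ae_notMem.1 hnot]
    with ω htrans hω
  simp only [not_forall, not_lt] at hω
  obtain ⟨N, hN, hdN⟩ := hω
  refine eventually_atTop.2 ⟨N, fun n hn => ?_⟩
  have hmem : ∀ k, N ≤ k → s ∈ Finset.Icc 1 k := fun k hk => by
    rw [Finset.mem_Icc]
    omega
  have hinv : ∀ k, N ≤ k → ∃ S, UAInvariant m d k (G k ω) ∧ S ⊆ lowDegSet d (G k ω) k ∧
      G (k + 1) ω = attachStep (G k ω) (k + 1) S := fun k hk => by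
    obtain ⟨t, ht, hω⟩ := htrans k (by omega)
    obtain ⟨hg, hS, hc⟩ := mem_uaTransitions.1 ht
    rw [← hω.2] at hg hS
    exact ⟨t.2, hg, hS, hω.2 ▸ hω.1⟩
  induction n, hn using Nat.le_induction with
  | base =>
    obtain ⟨S, hg, -⟩ := hinv N le_rfl
    exact (hg.deg_le s (hmem N le_rfl)).antisymm hdN
  | succ n hn ih =>
    obtain ⟨S, hg, hS, hstep⟩ := hinv n hn
    rw [hstep, hg.graphDeg_attachStep_old S (hmem n hn), ih, if_neg, add_zero]
    exact fun hsS => absurd (mem_lowDegSet.1 (hS hsS)).2 (by omega)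

end IsUAProcess

lemma eventually_walk_graphDeg_eq {m d : ℕ} {Ω : Type*} {G : ℕ → Ω → SimpleGraph ℕ} {ω : Ω}
    (htrans : ∀ n, m ≤ n → ∃ t ∈ uaTransitions m d n, ω ∈ transitionEvent G n t)
    (hdeg : ∀ s, 1 ≤ s → ∀ᶠ n in atTop, graphDeg (G n ω) s = d) (a n₀ : ℕ) :
    ∀ᶠ n in atTop, ∀ u ∈ Finset.Icc 1 n₀, ∀ v, ∀ p : (G n ω).Walk u v, p.length ≤ a →
      graphDeg (G n ω) v = d := by
  have hsat : ∀ n₀, ∀ᶠ n in atTop, ∀ u ∈ Finset.Icc 1 n₀, graphDeg (G n ω) u = d := fun n₀ =>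
    (Filter.eventually_all_finset _).2 fun u hu => hdeg u (Finset.mem_Icc.1 hu).1
  induction a generalizing n₀ with
  | zero =>
    filter_upwards [hsat n₀] with n hn u hu v p hp
    obtain rfl := SimpleGraph.Walk.eq_of_length_eq_zero (Nat.le_zero.1 hp)
    exact hn u hu
  | succ a ih =>
    obtain ⟨N', hN'⟩ := eventually_atTop.1 (hsat n₀)
    set N := max N' (max n₀ m)
    have hadj : ∀ n, N ≤ n → ∀ u ∈ Finset.Icc 1 n₀, ∀ w, (G n ω).Adj u w →
        w ∈ Finset.Icc 1 N := by
      intro n hn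
      induction n, hn using Nat.le_induction with
      | base =>
        intro u _ w huw
        obtain ⟨t, ht, hω⟩ := htrans N (by omega)
        obtain ⟨hg, -⟩ := mem_uaTransitions.1 ht
        rw [← hω.2] at hg
        exact hg.mem_of_adj _ _ huw.symm
      | succ n hn ihn =>
        intro u hu w huw
        obtain ⟨t, ht, hω⟩ := htrans n (by omega)
        obtain ⟨-, hS, -⟩ := mem_uaTransitions.1 ht
        have hstep := hω.1
        simp only [Set.mem_ofPred_eq] at hstep
        rw [hstep, attachStep_adj] at huw
        rw [← hω.2] at huw hS
        rcases huw with huw | ⟨-, ⟨rfl, -⟩ | ⟨-, huS⟩⟩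
        · exact ihn u hu w huw
        · rw [Finset.mem_Icc] at hu
          omega
        · exact absurd (mem_lowDegSet.1 (hS huS)).2 (hN' n (by omega) u hu).not_lt
    filter_upwards [ih N, hsat n₀, eventually_ge_atTop N] with n hn hn₀ hNn u hu v p hp
    cases p with
    | nil => exact hn₀ u hu
    | cons huw q =>
      rw [SimpleGraph.Walk.length_cons] at hp
      exact hn _ (hadj n hNn u hu _ huw) v q (by omega)

lemma tendsto_measure_of_ae_eventually {Ω : Type*} [MeasurableSpace Ω] {μ : Measure Ω}
    [IsProbabilityMeasure μ] {P : ℕ → Ω → Prop} (h : ∀ᵐ ω ∂μ, ∀ᶠ n in atTop, P n ω) :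
    Tendsto (fun n => μ {ω | P n ω}) atTop (𝓝 1) := by
  have hmono : Monotone fun N => {ω | ∀ n, N ≤ n → P n ω} :=
    fun N N' hN ω hω n hn => hω n (hN.trans hn)
  have hU : μ (⋃ N, {ω | ∀ n, N ≤ n → P n ω}) = 1 := by
    rw [← measure_univ (μ := μ)]
    refine measure_congr ?_
    rw [ae_eq_univ, ← mem_ae_iff]
    filter_upwards [h] with ω hω
    simpa using eventually_atTop.1 hω
  have hlim := tendsto_measure_iUnion_atTop (μ := μ) hmono
  rw [hU] at hlim
  exact tendsto_of_tendsto_of_tendsto_of_le_of_le hlim tendsto_const_nhds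
    (fun N => measure_mono fun ω hω => hω N le_rfl) (fun N => prob_le_one)

/-- In the bounded-degree uniform attachment process, for any fixed `s ≥ m` the degree of
vertex `s` in `G_n` equals `d` with high probability; moreover, for any fixed `n₀` and `a`,
with high probability every vertex of `G_n` at graph distance at most `a` from
`[n₀] = {1,…,n₀}` has degree exactly `d` in `G_n`. -/
theorem uniform_attachment_initial_degrees
    (m d : ℕ) (hm : 1 ≤ m) (hd : 2 * m < d)
    {Ω : Type*} [MeasurableSpace Ω] (μ : Measure Ω) [IsProbabilityMeasure μ]
    (G : ℕ → Ω → SimpleGraph ℕ) (hG : IsUAProcess m d μ G) :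
    (∀ s : ℕ, m ≤ s →
      Tendsto (fun n : ℕ => μ {ω | graphDeg (G n ω) s = d}) atTop (𝓝 1)) ∧
    (∀ n₀ a : ℕ,
      Tendsto (fun n : ℕ => μ {ω | ∀ v : ℕ,
          (∃ u ∈ Finset.Icc 1 n₀, ∃ p : (G n ω).Walk u v, p.length ≤ a) →
          graphDeg (G n ω) v = d})
        atTop (𝓝 1)) := by
  refine ⟨fun s hs => tendsto_measure_of_ae_eventually ?_, fun n₀ a =>
    tendsto_measure_of_ae_eventually ?_⟩
  · filter_upwards [hG.ae_eventually_graphDeg_eq hm hd s] with ω hω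
    exact hω (hm.trans hs)
  · have hdeg := ae_all_iff.2 fun s => hG.ae_eventually_graphDeg_eq hm hd s
    filter_upwards [hdeg, hG.ae_forall_transition hm hd] with ω hdeg htrans
    filter_upwards [eventually_walk_graphDeg_eq htrans hdeg a n₀]
      with n hn v ⟨u, hu, p, hp⟩
    exact hn u hu v p hp
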